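/- For a rational number α, the order of the Laurent expansion of the term q^{k(k+1)/2}·binom(α−1,k)_q tends to +∞ as k → ∞ if and only if α ≥ 1 (with the convention ord(0) = ∞). Consequently, for rational α ≥ 1 the series B_{α−1}(q,−q) = Σ_{k≥0} (−1)^k·q^{k(k+1)/2}·binom(α−1,k)_q defines a well-defined element of ℚ((q)) (each q-coefficient receives only finitely many nonzero contributions), while for rational α < 1 it does not. -/

import Mathlib

/-!
Put `v = 1 - (1 - q)[α]_q`, the `q`-analogue of `q ^ α`. The shift rule for `q`-rationals says that
`α ↦ α + 1` multiplies `v` by `q`, and it turns the `k`-th signed term of the series into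
`f_k(v) = ∏_{i=1}^k (v - q^i) / (1 - q^i)` (`term_eq_fprod`). The continued fraction shows that
`[γ]_q` vanishes at `q = 0` for `0 < γ < 1`, hence `v` has order exactly `⌊α⌋` at `q = 0`
(`hasOrd_vq`).

If `α ≥ 1`, every factor of `f_k(v)` has positive order, so `f_k(v)` has order at least `k` and the
series converges. If `α < 1`, every factor has order exactly `⌊α⌋`, so `f_k(v)` has order
`k⌊α⌋ ≤ 0`. This settles the equivalence, but for `α < 0` it does not yet preclude convergence in
the coefficientwise sense, where the orders of the partial sums need not be bounded below.

Coefficientwise convergence forces `f_k(v) → 0` coefficientwise. The identity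
`f_{n+1}(q v) = f_{n+1}(v) - v f_n(v)` (`fprod_shift`) propagates this property, up to a polynomial
factor, from `v` to `q v`, that is from `α` to `α + 1`. If `α` is an integer one arrives at `α = 0`,
where `v = 1` and `f_n(1) = 1`, a contradiction. Otherwise one arrives at `-1 < α < 0`, where `v`
has a simple pole at `q = 0` and, again by the continued fraction, neither a zero nor a pole at
`q = ∞`. Writing `v = M / N` with `deg N = deg M` and `E_n = Q f_n(v)`, the identity says that
`N E_{n+1} - M E_n` has no polar part at `q = 0`, since `q v` is a unit there. Comparing
coefficients from the top, if the polar coefficients of `E_{n+1}` vanish down to some exponent, then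
so do those of `E_n`, once the `deg M` topmost ones do (`gap_descent`). Since `E_n → 0`, such gaps
of any prescribed length exist for large `n`; carrying them back to a fixed index contradicts the
fact that `E_n` has order `ord Q - n`.
-/

noncomputable section

open Finset

/-- The `q`-integer `[n]_q = 1 + q + ⋯ + q^{n-1}` as a rational function in `q`. -/
def qNum (n : ℕ) : RatFunc ℚ := ∑ i ∈ Finset.range n, RatFunc.X ^ i

/-- The `q⁻¹`-integer `[n]_{q⁻¹} = 1 + q⁻¹ + ⋯ + q^{-(n-1)}`. -/
def qNumInv (n : ℕ) : RatFunc ℚ := ∑ i ∈ Finset.range n, (RatFunc.X)⁻¹ ^ i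

/-- The continued fraction expansion of `p/q` computed by the Euclidean algorithm. -/
def cfNat (p q : ℕ) : List ℕ :=
  if h : q = 0 then [] else (p / q) :: cfNat q (p % q)
termination_by q
decreasing_by exact Nat.mod_lt _ (Nat.pos_of_ne_zero h)

/-- Turn a continued fraction expansion into one of even length,
replacing a final coefficient `aₙ` by `aₙ - 1, 1` if needed. -/
def evenize (l : List ℕ) : List ℕ :=
  if l.length % 2 = 0 then l else l.dropLast ++ [l.getLast! - 1, 1]

/-- Evaluation of the Morier-Genoud--Ovsienko `q`-deformed continued fraction
`[a₁]_q + q^{a₁}/([a₂]_{q⁻¹} + q^{-a₂}/([a₃]_q + ⋯ + q^{a_{2m-1}}/[a_{2m}]_{q⁻¹}))`.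
The boolean records whether the current position is odd (`true`) or even (`false`).
(The empty continued fraction is sent to `0`; since division by zero yields `0`
in `RatFunc ℚ`, a final term `[a]_{q⁻¹} + q^{-a}/0⁻ = [a]_{q⁻¹}` comes out correctly.) -/
def qCF : Bool → List ℕ → RatFunc ℚ
  | _, [] => 0
  | true, a :: l => qNum a + RatFunc.X ^ a / qCF false l
  | false, a :: l => qNumInv a + (RatFunc.X)⁻¹ ^ a / qCF true l

/-- The Morier-Genoud--Ovsienko `q`-rational of `α > 1`, via the even-length
continued fraction expansion of `α`. -/
def qRatCF (α : ℚ) : RatFunc ℚ := qCF true (evenize (cfNat α.num.toNat α.den))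

/-- The Morier-Genoud--Ovsienko `q`-rational `[α]_q ∈ ℚ(q)`, for all `α ∈ ℚ`:
for `α > 1` it is given by the `q`-deformed continued fraction, and it is
extended to all of `ℚ` by the rule `[α-1]_q = ([α]_q - 1)/q`. -/
def qRat (α : ℚ) : RatFunc ℚ :=
  if 1 < α then qRatCF α
  else (qRatCF (α + (2 - ⌊α⌋).toNat) - qNum (2 - ⌊α⌋).toNat) / RatFunc.X ^ (2 - ⌊α⌋).toNat

/-- `{α}_q := [α+1]_q - [α]_q`, the substitute for `q^α`. -/
def qPow (α : ℚ) : RatFunc ℚ := qRat (α + 1) - qRat α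

/-- The `q`-factorial `[k]_q!`. -/
def qFact (k : ℕ) : RatFunc ℚ := ∏ i ∈ Finset.range k, qNum (i + 1)

/-- The `q`-binomial coefficient `binom(α,k)_q = [α]_q [α-1]_q ⋯ [α-k+1]_q / [k]_q!`. -/
def qBinom (α : ℚ) (k : ℕ) : RatFunc ℚ :=
  (∏ i ∈ Finset.range k, qRat (α - i)) / qFact k

/-- The Laurent-series expansion (at `q = 0`) of a rational function. -/
def lau (f : RatFunc ℚ) : LaurentSeries ℚ := ↑f


/-- The element `q` of the field of Laurent series `ℚ((q))`. -/
def qL : LaurentSeries ℚ := HahnSeries.single 1 1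

/-- The `k`-th term `(-1)^k·q^{k(k+1)/2}·binom(α-1,k)_q` of the series
`B_{α-1}(q,-q)` defining the `q`-Gamma function. -/
def gammaTerm (α : ℚ) (k : ℕ) : LaurentSeries ℚ :=
  (-1 : LaurentSeries ℚ) ^ k * qL ^ (k * (k + 1) / 2) * lau (qBinom (α - 1) k)

/-- The ordinary generalized binomial coefficient `C(α+n-2,n)
  = (α-1)·α·(α+1)⋯(α+n-2)/n!`. -/
def genBinom (α : ℚ) (n : ℕ) : ℚ := (∏ i ∈ Finset.range n, (α - 1 + i)) / n.factorial

/-- `T_α = 1/(1-q)^{α-1} := Σ_{n≥0} C(α+n-2,n)·qⁿ`, as a Laurent series. -/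
def Tser (α : ℚ) : LaurentSeries ℚ :=
  HahnSeries.ofPowerSeries ℤ ℚ (PowerSeries.mk fun n => genBinom α n)

/-- `S` is the sum `S_α = Σ_{k≥0} (-1)^k·q^{k(k+1)/2}·binom(α-1,k)_q = B_{α-1}(q,-q)`,
in the sense that each `q`-coefficient of the partial sums stabilizes to that of `S`. -/
def IsGammaSum (α : ℚ) (S : LaurentSeries ℚ) : Prop :=
  ∀ m : ℤ, ∃ K₀ : ℕ, ∀ K ≥ K₀,
    (∑ k ∈ Finset.range K, gammaTerm α k).coeff m = S.coeff m


/-! ### Orders at zero and at infinity -/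

/-- Laurent expansion at `0` as a ring homomorphism, over any field. -/
def lauF (F : Type*) [Field F] : RatFunc F →+* LaurentSeries F :=
  letI := RatFunc.liftAlgebra F (LaurentSeries F)
  algebraMap (RatFunc F) (LaurentSeries F)

/-- `lau` as a ring homomorphism. -/
def lauHom : RatFunc ℚ →+* LaurentSeries ℚ := lauF ℚ

theorem lau_eq (f : RatFunc ℚ) : lau f = lauHom f := rfl

/-- `f` is nonzero of order exactly `n` at `q = 0`. -/
def HasOrd (f : RatFunc ℚ) (n : ℤ) : Prop := (lau f).orderTop = (n : WithTop ℤ)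

/-- `f` is nonzero of degree exactly `n`, i.e. has a pole of order `n` at `q = ∞`. -/
def HasDeg (f : RatFunc ℚ) (n : ℤ) : Prop := f ≠ 0 ∧ f.intDegree = n

theorem HasOrd.ne_zero {f : RatFunc ℚ} {n : ℤ} (h : HasOrd f n) : f ≠ 0 := by
  rintro rfl
  simp [HasOrd, lau_eq] at h

theorem HasOrd.mul {f g : RatFunc ℚ} {n m : ℤ} (hf : HasOrd f n) (hg : HasOrd g m) :
    HasOrd (f * g) (n + m) := by
  unfold HasOrd at *
  rw [lau_eq, map_mul, ← lau_eq, ← lau_eq, HahnSeries.orderTop_mul, hf, hg]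
  rfl

theorem hasOrd_one : HasOrd 1 0 := by
  simp [HasOrd, lau_eq]

theorem hasOrd_X : HasOrd RatFunc.X 1 := by
  unfold HasOrd lau
  rw [RatFunc.coe_X, HahnSeries.orderTop_single one_ne_zero]

theorem exists_hasOrd {f : RatFunc ℚ} (hf : f ≠ 0) : ∃ n, HasOrd f n := by
  refine ⟨(lau f).order, ?_⟩
  unfold HasOrd
  rw [HahnSeries.order_eq_orderTop_of_ne_zero]
  rw [lau_eq]
  simpa using hf

theorem HasOrd.unique {f : RatFunc ℚ} {n m : ℤ} (h : HasOrd f n) (h' : HasOrd f m) : n = m := by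
  unfold HasOrd at *
  rw [h] at h'
  exact_mod_cast h'

theorem HasOrd.inv {f : RatFunc ℚ} {n : ℤ} (h : HasOrd f n) : HasOrd f⁻¹ (-n) := by
  obtain ⟨m, hm⟩ := exists_hasOrd (inv_ne_zero h.ne_zero)
  have h1 := h.mul hm
  rw [mul_inv_cancel₀ h.ne_zero] at h1
  have := h1.unique hasOrd_one
  rwa [show -n = m by omega]

theorem HasOrd.div {f g : RatFunc ℚ} {n m : ℤ} (hf : HasOrd f n) (hg : HasOrd g m) :
    HasOrd (f / g) (n - m) := by
  rw [div_eq_mul_inv, sub_eq_add_neg]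
  exact hf.mul hg.inv

theorem HasOrd.pow {f : RatFunc ℚ} {n : ℤ} (h : HasOrd f n) (k : ℕ) : HasOrd (f ^ k) (k * n) := by
  induction k with
  | zero => simpa using hasOrd_one
  | succ k ih =>
    rw [pow_succ]
    convert ih.mul h using 1
    push_cast
    ring

theorem HasOrd.zpow {f : RatFunc ℚ} {n : ℤ} (h : HasOrd f n) (k : ℤ) :
    HasOrd (f ^ k) (k * n) := by
  cases k with
  | ofNat k => simpa using h.pow k
  | negSucc k =>
    rw [zpow_negSucc]
    convert (h.pow (k + 1)).inv using 1
    rw [Int.negSucc_eq]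
    push_cast
    ring

theorem HasOrd.neg {f : RatFunc ℚ} {n : ℤ} (h : HasOrd f n) : HasOrd (-f) n := by
  unfold HasOrd at *
  rw [lau_eq, map_neg, ← lau_eq, HahnSeries.orderTop_neg, h]

theorem HasOrd.add {f g : RatFunc ℚ} {n m : ℤ} (hf : HasOrd f n) (hg : HasOrd g m)
    (hnm : n < m) : HasOrd (f + g) n := by
  unfold HasOrd at *
  rw [lau_eq, map_add, ← lau_eq, ← lau_eq, HahnSeries.orderTop_add_eq_left, hf]
  rw [hf, hg]
  exact_mod_cast hnm

theorem HasOrd.sub {f g : RatFunc ℚ} {n m : ℤ} (hf : HasOrd f n) (hg : HasOrd g m)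
    (hnm : n < m) : HasOrd (f - g) n := by
  rw [sub_eq_add_neg]
  exact hf.add hg.neg hnm

theorem HasDeg.mul {f g : RatFunc ℚ} {n m : ℤ} (hf : HasDeg f n) (hg : HasDeg g m) :
    HasDeg (f * g) (n + m) :=
  ⟨mul_ne_zero hf.1 hg.1, by rw [RatFunc.intDegree_mul hf.1 hg.1, hf.2, hg.2]⟩

theorem hasDeg_one : HasDeg 1 0 := ⟨one_ne_zero, RatFunc.intDegree_one⟩

theorem hasDeg_X : HasDeg RatFunc.X 1 := ⟨RatFunc.X_ne_zero, RatFunc.intDegree_X⟩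

theorem HasDeg.inv {f : RatFunc ℚ} {n : ℤ} (h : HasDeg f n) : HasDeg f⁻¹ (-n) :=
  ⟨inv_ne_zero h.1, by rw [RatFunc.intDegree_inv, h.2]⟩

theorem HasDeg.div {f g : RatFunc ℚ} {n m : ℤ} (hf : HasDeg f n) (hg : HasDeg g m) :
    HasDeg (f / g) (n - m) := by
  rw [div_eq_mul_inv, sub_eq_add_neg]
  exact hf.mul hg.inv

theorem HasDeg.pow {f : RatFunc ℚ} {n : ℤ} (h : HasDeg f n) (k : ℕ) : HasDeg (f ^ k) (k * n) := by
  induction k with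
  | zero => simpa using hasDeg_one
  | succ k ih =>
    rw [pow_succ]
    convert ih.mul h using 1
    push_cast
    ring

theorem HasDeg.neg {f : RatFunc ℚ} {n : ℤ} (h : HasDeg f n) : HasDeg (-f) n :=
  ⟨neg_ne_zero.mpr h.1, by rw [RatFunc.intDegree_neg, h.2]⟩

theorem HasDeg.add {f g : RatFunc ℚ} {n m : ℤ} (hf : HasDeg f n) (hg : HasDeg g m)
    (hnm : m < n) : HasDeg (f + g) n := by
  have h0 : f + g ≠ 0 := by
    intro h
    have h1 : f = -g := eq_neg_of_add_eq_zero_left h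
    have := hf.2
    rw [h1, RatFunc.intDegree_neg, hg.2] at this
    omega
  refine ⟨h0, ?_⟩
  have h1 := RatFunc.intDegree_add_le hg.1 h0
  have h2 := RatFunc.intDegree_add_le (x := f + g) (y := -g) (neg_ne_zero.mpr hg.1)
    (by simpa using hf.1)
  rw [add_neg_cancel_right, RatFunc.intDegree_neg] at h2
  rw [hf.2, hg.2] at *
  omega

theorem HasDeg.sub {f g : RatFunc ℚ} {n m : ℤ} (hf : HasDeg f n) (hg : HasDeg g m)
    (hnm : m < n) : HasDeg (f - g) n := by
  rw [sub_eq_add_neg]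
  exact hf.add hg.neg hnm

/-! ### Quantum continued fractions and rationals -/

theorem qNum_one : qNum 1 = 1 := by simp [qNum]
theorem qNumInv_one : qNumInv 1 = 1 := by simp [qNumInv]

theorem qNum_succ' (n : ℕ) : qNum (n + 1) = 1 + RatFunc.X * qNum n := by
  unfold qNum
  rw [Finset.sum_range_succ', Finset.mul_sum, add_comm]
  simp only [pow_zero, pow_succ']

theorem qNum_succ (n : ℕ) : qNum (n + 1) = qNum n + RatFunc.X ^ n :=
  Finset.sum_range_succ _ n

theorem qNumInv_succ' (n : ℕ) : qNumInv (n + 1) = 1 + RatFunc.X⁻¹ * qNumInv n := by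
  unfold qNumInv
  rw [Finset.sum_range_succ', Finset.mul_sum, add_comm]
  simp only [pow_zero, pow_succ']

theorem one_sub_mul_qNum (n : ℕ) : (1 - RatFunc.X) * qNum n = 1 - RatFunc.X ^ n := by
  unfold qNum
  exact mul_neg_geom_sum RatFunc.X n

theorem hasOrd_qNum {n : ℕ} (hn : 1 ≤ n) : HasOrd (qNum n) 0 := by
  induction n, hn using Nat.le_induction with
  | base => rw [qNum_one]; exact hasOrd_one
  | succ n hn ih =>
    rw [qNum_succ']
    exact hasOrd_one.add (hasOrd_X.mul ih) (by omega)

theorem hasOrd_qNumInv {n : ℕ} (hn : 1 ≤ n) : HasOrd (qNumInv n) (1 - n) := by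
  induction n, hn using Nat.le_induction with
  | base => rw [qNumInv_one]; exact hasOrd_one
  | succ n hn ih =>
    rw [qNumInv_succ', add_comm]
    convert (hasOrd_X.inv.mul ih).add hasOrd_one (by omega) using 1
    push_cast
    ring

theorem hasDeg_qNum {n : ℕ} (hn : 1 ≤ n) : HasDeg (qNum n) (n - 1) := by
  induction n, hn using Nat.le_induction with
  | base => rw [qNum_one]; exact hasDeg_one
  | succ n hn ih =>
    rw [qNum_succ', add_comm]
    convert (hasDeg_X.mul ih).add hasDeg_one (by omega) using 1
    push_cast
    ring

theorem hasDeg_qNumInv {n : ℕ} (hn : 1 ≤ n) : HasDeg (qNumInv n) 0 := by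
  induction n, hn using Nat.le_induction with
  | base => rw [qNumInv_one]; exact hasDeg_one
  | succ n hn ih =>
    rw [qNumInv_succ']
    exact hasDeg_one.add (hasDeg_X.inv.mul ih) (by omega)

/-- Orders at `0` and `∞` of the tail, in an even position, of a `q`-continued fraction with
positive coefficients; the tail `[1]` is the only one of order `0` at `q = 0`. -/
theorem qCF_false_spec : ∀ l : List ℕ, (∀ a ∈ l, 1 ≤ a) → l.length % 2 = 1 →
    HasDeg (qCF false l) 0 ∧ ∃ e : ℤ, HasOrd (qCF false l) e ∧ e ≤ 0 ∧ (l ≠ [1] → e ≤ -1)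
  | [], _, h => by simp at h
  | [a], hpos, _ => by
    have ha : 1 ≤ a := hpos a (by simp)
    simp only [qCF, div_zero, add_zero]
    refine ⟨hasDeg_qNumInv ha, _, hasOrd_qNumInv ha, by omega, fun h => ?_⟩
    have : a ≠ 1 := fun h' => h (by rw [h'])
    omega
  | a :: b :: l, hpos, hlen => by
    have ha : 1 ≤ a := hpos a (by simp)
    have hb : 1 ≤ b := hpos b (by simp)
    obtain ⟨hd, e, ho, he, -⟩ := qCF_false_spec l (fun x hx => hpos x (by simp [hx]))
      (by simp only [List.length_cons] at hlen; omega)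
    have hdT : HasDeg (qCF true (b :: l)) b := by
      simp only [qCF]
      rw [add_comm]
      convert ((hasDeg_X.pow b).div hd).add (hasDeg_qNum hb) (by omega) using 1
      ring
    have hoT : HasOrd (qCF true (b :: l)) 0 := by
      simp only [qCF]
      exact (hasOrd_qNum hb).add ((hasOrd_X.pow b).div ho) (by omega)
    rw [show qCF false (a :: b :: l) = qNumInv a + (RatFunc.X)⁻¹ ^ a / qCF true (b :: l) by
      simp only [qCF]]
    refine ⟨(hasDeg_qNumInv ha).add ((hasDeg_X.inv.pow a).div hdT) (by omega), -a, ?_, by omega,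
      fun _ => by omega⟩
    rw [add_comm]
    convert ((hasOrd_X.inv.pow a).div hoT).add (hasOrd_qNumInv ha) (by omega) using 1
    ring

/-- The coefficients of a continued fraction in normal form, of a rational number `> 1`: they are
positive and the last one is at least `2`. -/
inductive IsNormalCF : List ℕ → Prop
  | single {a : ℕ} : 2 ≤ a → IsNormalCF [a]
  | cons {a : ℕ} {l : List ℕ} : 1 ≤ a → IsNormalCF l → IsNormalCF (a :: l)

theorem isNormalCF_cfNat (q : ℕ) : ∀ p, 0 < q → q < p → IsNormalCF (cfNat p q) := by
  induction q using Nat.strong_induction_on with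
  | _ q ih =>
    intro p hq hp
    rw [cfNat, dif_neg hq.ne']
    rcases Nat.eq_zero_or_pos (p % q) with h | h
    · rw [h, cfNat, dif_pos rfl]
      refine .single ?_
      obtain ⟨c, rfl⟩ := Nat.dvd_of_mod_eq_zero h
      rw [Nat.mul_div_cancel_left _ hq]
      by_contra hc
      have : c ≤ 1 := by omega
      nlinarith
    · exact .cons (Nat.div_pos hp.le hq) (ih _ (Nat.mod_lt _ hq) _ h (Nat.mod_lt _ hq))

theorem IsNormalCF.pos {l : List ℕ} (h : IsNormalCF l) : ∀ a ∈ l, 1 ≤ a := by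
  induction h with
  | single h => intro b hb; simp at hb; omega
  | cons h _ ih =>
    intro b hb
    rcases List.mem_cons.mp hb with rfl | hb
    · exact h
    · exact ih b hb

theorem IsNormalCF.ne_nil {l : List ℕ} (h : IsNormalCF l) : l ≠ [] := by
  cases h <;> simp

theorem IsNormalCF.getLast {l : List ℕ} (h : IsNormalCF l) : 2 ≤ l.getLast! := by
  induction h with
  | single h => simpa using h
  | @cons a l _ hl ih =>
    obtain ⟨b, t, rfl⟩ := List.exists_cons_of_ne_nil hl.ne_nil
    simpa [List.getLast!] using ih

theorem IsNormalCF.ne_one {l : List ℕ} (h : IsNormalCF l) : l ≠ [1] := by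
  rintro rfl
  have := h.getLast
  simp at this

/-- The odd-length analogue of `evenize`; it gives the tail of `evenize`, see `evenize_cons`. -/
def oddize (l : List ℕ) : List ℕ :=
  if l.length % 2 = 1 then l else l.dropLast ++ [l.getLast! - 1, 1]

theorem evenize_cons (a : ℕ) {l : List ℕ} (hl : l ≠ []) : evenize (a :: l) = a :: oddize l := by
  obtain ⟨b, t, rfl⟩ := List.exists_cons_of_ne_nil hl
  unfold evenize oddize
  by_cases h : (b :: t).length % 2 = 1
  · rw [if_pos h, if_pos (by simp only [List.length_cons] at *; omega)]
  · rw [if_neg h, if_neg (by simp only [List.length_cons] at *; omega)]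
    simp [List.getLast!]

theorem oddize_spec {l : List ℕ} (h : IsNormalCF l) :
    (∀ a ∈ oddize l, 1 ≤ a) ∧ (oddize l).length % 2 = 1 ∧ oddize l ≠ [1] := by
  unfold oddize
  split_ifs with h1
  · exact ⟨h.pos, h1, h.ne_one⟩
  · have h2 := h.getLast
    have h3 : 0 < l.length := List.length_pos_iff.mpr h.ne_nil
    refine ⟨fun a ha => ?_, ?_, fun h' => ?_⟩
    · rw [List.mem_append] at ha
      rcases ha with ha | ha
      · exact h.pos a (List.mem_of_mem_dropLast ha)
      · simp only [List.mem_cons, List.not_mem_nil, or_false] at ha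
        omega
    · simp only [List.length_append, List.length_dropLast, List.length_cons, List.length_nil]
      omega
    · have := congrArg List.length h'
      simp at this

/-- For `0 < γ < 1` the expansion starts with the coefficient `0`, so `qRatCF γ` is the inverse of
the tail treated in `qCF_false_spec`, which is not `[1]` since `γ ≠ 1`. -/
theorem qRatCF_spec {γ : ℚ} (h0 : 0 < γ) (h1 : γ < 1) :
    HasDeg (qRatCF γ) 0 ∧ ∃ e : ℤ, 1 ≤ e ∧ HasOrd (qRatCF γ) e := by
  have hn : 0 < γ.num := Rat.num_pos.mpr h0
  have hlt : γ.num.toNat < γ.den := by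
    have := Rat.num_lt_denom_iff.mpr h1
    omega
  have hN : IsNormalCF (cfNat γ.den γ.num.toNat) := isNormalCF_cfNat _ _ (by omega) hlt
  have hcf : evenize (cfNat γ.num.toNat γ.den) = 0 :: oddize (cfNat γ.den γ.num.toNat) := by
    rw [cfNat, dif_neg γ.den_ne_zero, Nat.div_eq_of_lt hlt, Nat.mod_eq_of_lt hlt,
      evenize_cons _ hN.ne_nil]
  obtain ⟨hp, hl, hne⟩ := oddize_spec hN
  obtain ⟨hd, e, ho, -, he⟩ := qCF_false_spec _ hp hl
  unfold qRatCF
  rw [hcf]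
  simp only [qCF, pow_zero, qNum, Finset.range_zero, Finset.sum_empty, zero_add]
  exact ⟨hasDeg_one.div hd, 0 - e, by have := he hne; omega, hasOrd_one.div ho⟩

theorem qRatCF_add_one {α : ℚ} (h0 : 0 < α) : qRatCF (α + 1) = 1 + RatFunc.X * qRatCF α := by
  have hn : 0 < α.num := Rat.num_pos.mpr h0
  have hd : 0 < α.den := α.den_pos
  have hden : (α + 1).den = α.den := by exact_mod_cast Rat.add_natCast_den α 1
  have hnum : (α + 1).num = α.num + α.den := by
    have h1 : ((α + 1).num : ℚ) = (α + 1) * (α + 1).den := (Rat.mul_den_eq_num _).symm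
    rw [hden, add_mul, Rat.mul_den_eq_num] at h1
    have h2 : ((α + 1).num : ℚ) = ((α.num + α.den : ℤ) : ℚ) := by rw [h1]; push_cast; ring
    exact_mod_cast h2
  have htn : (α + 1).num.toNat = α.num.toNat + α.den := by omega
  unfold qRatCF
  rw [hden, htn, cfNat, dif_neg hd.ne', Nat.add_div_right _ hd, Nat.add_mod_right]
  rw [cfNat.eq_def α.num.toNat, dif_neg hd.ne']
  by_cases h : α.num.toNat % α.den = 0
  · have ha : 1 ≤ α.num.toNat / α.den :=
      Nat.div_pos (Nat.le_of_dvd (by omega) (Nat.dvd_of_mod_eq_zero h)) hd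
    obtain ⟨b, hb⟩ := Nat.exists_eq_add_of_le' ha
    rw [h, hb, cfNat, dif_pos rfl]
    simp [evenize, qCF, qNum_succ', qNumInv_one]
    ring
  · have hne : cfNat α.den (α.num.toNat % α.den) ≠ [] := by
      rw [cfNat, dif_neg h]; simp
    rw [evenize_cons _ hne, evenize_cons _ hne]
    simp only [qCF, qNum_succ']
    ring

theorem qRatCF_add_nat {α : ℚ} (h0 : 0 < α) (n : ℕ) :
    qRatCF (α + n) = qNum n + RatFunc.X ^ n * qRatCF α := by
  induction n with
  | zero => simp [qNum]
  | succ n ih =>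
    push_cast
    rw [← add_assoc, qRatCF_add_one (by positivity), ih, qNum_succ']
    ring

/-- `[α]_q` may be computed from the continued fraction of any positive integral translate of
`α`. -/
theorem qRat_eq (α : ℚ) (n : ℕ) (h : 0 < α + n) :
    qRat α = (qRatCF (α + n) - qNum n) / RatFunc.X ^ n := by
  have key : ∀ (m k : ℕ), 0 < α + m →
      (qRatCF (α + m) - qNum m) / RatFunc.X ^ m
        = (qRatCF (α + (m + k : ℕ)) - qNum (m + k)) / RatFunc.X ^ (m + k) := by
    intro m k hm
    induction k with
    | zero => rfl
    | succ k ih =>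
      rw [ih]
      have : 0 < α + (m + k : ℕ) := by push_cast; linarith [(Nat.cast_nonneg k : (0:ℚ) ≤ k)]
      rw [show α + ((m + (k + 1) : ℕ) : ℚ) = α + (m + k : ℕ) + 1 by push_cast; ring,
        qRatCF_add_one this, ← add_assoc m k 1, qNum_succ', pow_succ]
      have := RatFunc.X_ne_zero (K := ℚ)
      field_simp
      ring
  have key2 : ∀ m k : ℕ, 0 < α + m → 0 < α + k → 
      (qRatCF (α + m) - qNum m) / RatFunc.X ^ m = (qRatCF (α + k) - qNum k) / RatFunc.X ^ k := by
    intro m k hm hk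
    rw [key m k hm, key k m hk, add_comm m k]
  unfold qRat
  split_ifs with h1
  · rw [← key2 0 n (by push_cast; linarith) h]
    simp [qNum]
  · refine key2 _ n ?_ h
    have h2 : (((2 - ⌊α⌋).toNat : ℤ) : ℚ) = ((2 - ⌊α⌋ : ℤ) : ℚ) := by
      rw [Int.toNat_of_nonneg]
      have : ⌊α⌋ ≤ 1 := by
        rw [Int.floor_le_iff]; push_cast; linarith
      omega
    push_cast at h2
    rw [h2]
    linarith [Int.floor_le α]

theorem qRat_add_one (α : ℚ) : qRat (α + 1) = 1 + RatFunc.X * qRat α := by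
  obtain ⟨n, hn⟩ := exists_nat_gt (-α)
  rw [qRat_eq (α + 1) n (by linarith), qRat_eq α (n + 1) (by push_cast; linarith)]
  rw [qNum_succ, pow_succ, show α + ((n + 1 : ℕ) : ℚ) = α + 1 + n by push_cast; ring]
  have := RatFunc.X_ne_zero (K := ℚ)
  field_simp
  ring

theorem qRat_of_pos {α : ℚ} (h : 0 < α) : qRat α = qRatCF α := by
  rw [qRat_eq α 0 (by simpa using h)]
  simp [qNum]

theorem qRat_zero : qRat 0 = 0 := by
  rw [qRat_eq 0 1 (by norm_num)]
  have : qRatCF 1 = 1 := by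
    unfold qRatCF
    have : cfNat 1 1 = [1] := by
      rw [cfNat, dif_neg one_ne_zero, cfNat, dif_pos (by norm_num)]
    simp [this, evenize, qCF, qNum, qNumInv_one]
  simp [this, qNum_one]

/-! ### The terms of the series as products -/

/-- The `q`-analogue `1 - (1 - q)[α]_q` of `q ^ α`; it is `q ^ α` for integral `α`. -/
def vq (α : ℚ) : RatFunc ℚ := 1 - (1 - RatFunc.X) * qRat α

theorem one_sub_X_pow_ne {n : ℕ} (hn : 1 ≤ n) : (1 : RatFunc ℚ) - RatFunc.X ^ n ≠ 0 :=
  (hasOrd_one.sub (hasOrd_X.pow n) (by omega)).ne_zero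

theorem vq_add_one (α : ℚ) : vq (α + 1) = RatFunc.X * vq α := by
  unfold vq
  rw [qRat_add_one]
  ring

theorem vq_add_nat (α : ℚ) (n : ℕ) : vq (α + n) = RatFunc.X ^ n * vq α := by
  induction n with
  | zero => simp
  | succ n ih =>
    push_cast
    rw [← add_assoc, vq_add_one, ih, pow_succ]
    ring

theorem vq_add_int (α : ℚ) (n : ℤ) : vq (α + n) = RatFunc.X ^ n * vq α := by
  cases n with
  | ofNat n => simpa using vq_add_nat α n
  | negSucc n =>
    have h := vq_add_nat (α + (Int.negSucc n : ℤ)) (n + 1)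
    rw [show α + ((Int.negSucc n : ℤ) : ℚ) + ((n + 1 : ℕ) : ℚ) = α by
      rw [Int.negSucc_eq]; push_cast; ring] at h
    rw [h, zpow_negSucc, ← mul_assoc, inv_mul_cancel₀ (pow_ne_zero _ RatFunc.X_ne_zero), one_mul]

theorem vq_zero : vq 0 = 1 := by
  simp [vq, qRat_zero]

/-- The order of `vq` grows by one under `α ↦ α + 1`, and it is `0` on `[0, 1)` because there
`[α]_q` vanishes at `q = 0`. -/
theorem hasOrd_vq (α : ℚ) : HasOrd (vq α) ⌊α⌋ := by
  have key : HasOrd (vq (Int.fract α)) 0 := by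
    rcases (Int.fract_nonneg α).eq_or_lt with h | h
    · rw [← h, vq_zero]; exact hasOrd_one
    · obtain ⟨-, e, he, ho⟩ := qRatCF_spec h (Int.fract_lt_one α)
      unfold vq
      rw [qRat_of_pos h]
      exact hasOrd_one.sub ((hasOrd_one.sub hasOrd_X (by omega)).mul ho) (by omega)
  have h := vq_add_int (Int.fract α) ⌊α⌋
  rw [Int.fract_add_floor] at h
  rw [h]
  simpa using (hasOrd_X.zpow ⌊α⌋).mul key

/-- On `(-1, 0)` the function `vq α` is a unit at `q = ∞`. -/
theorem hasDeg_vq {α : ℚ} (h1 : -1 < α) (h2 : α < 0) : HasDeg (vq α) 0 := by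
  obtain ⟨hd, e, he, ho⟩ := qRatCF_spec (γ := α + 1) (by linarith) (by linarith)
  have hX := hasDeg_X
  have h : vq α = (1 - (1 - RatFunc.X) * qRatCF (α + 1)) / RatFunc.X := by
    rw [eq_div_iff RatFunc.X_ne_zero, mul_comm, ← vq_add_one, vq, qRat_of_pos (by linarith)]
  have h3 : HasDeg (1 - RatFunc.X) 1 := by
    rw [← neg_sub]
    exact (hasDeg_X.sub hasDeg_one (by omega)).neg
  have h4 : HasDeg (1 - (1 - RatFunc.X) * qRatCF (α + 1)) 1 := by
    rw [← neg_sub]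
    exact ((h3.mul hd).sub hasDeg_one (by omega)).neg
  rw [h]
  exact h4.div hasDeg_X

/-- The product `∏_{i=1}^k (v - q^i) / (1 - q^i)`. For `v = vq α` it is the `k`-th term of the
series. -/
def fprod (k : ℕ) (v : RatFunc ℚ) : RatFunc ℚ :=
  ∏ i ∈ Finset.range k, (v - RatFunc.X ^ (i + 1)) / (1 - RatFunc.X ^ (i + 1))

theorem fprod_succ (k : ℕ) (v : RatFunc ℚ) :
    fprod (k + 1) v = fprod k v * ((v - RatFunc.X ^ (k + 1)) / (1 - RatFunc.X ^ (k + 1))) :=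
  Finset.prod_range_succ _ k

theorem qBinom_succ (β : ℚ) (k : ℕ) :
    qBinom β (k + 1) = qBinom β k * (qRat (β - k) / qNum (k + 1)) := by
  unfold qBinom qFact
  rw [Finset.prod_range_succ, Finset.prod_range_succ, mul_div_mul_comm]

theorem term_eq_fprod (α : ℚ) (k : ℕ) :
    (-1) ^ k * RatFunc.X ^ (k * (k + 1) / 2) * qBinom (α - 1) k = fprod k (vq α) := by
  induction k with
  | zero => simp [qBinom, qFact, fprod]
  | succ k ih =>
    have h1 : (k + 1) * (k + 1 + 1) / 2 = k * (k + 1) / 2 + (k + 1) := by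
      rw [show (k + 1) * (k + 1 + 1) = k * (k + 1) + (k + 1) * 2 by ring,
        Nat.add_mul_div_right _ _ two_pos]
    have h2 : vq α = RatFunc.X ^ (k + 1) * vq (α - 1 - k) := by
      rw [← vq_add_nat]
      congr 1
      push_cast
      ring
    have h3 := one_sub_X_pow_ne (n := k + 1) (by omega)
    have h4 : (1 : RatFunc ℚ) - RatFunc.X ≠ 0 := by simpa using one_sub_X_pow_ne le_rfl
    have h5 : qNum (k + 1) ≠ 0 := (hasOrd_qNum (by omega)).ne_zero
    have h6 : (vq α - RatFunc.X ^ (k + 1)) / (1 - RatFunc.X ^ (k + 1))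
        = -RatFunc.X ^ (k + 1) * (qRat (α - 1 - k) / qNum (k + 1)) := by
      rw [h2, ← one_sub_mul_qNum, vq]
      field_simp
      ring
    rw [fprod_succ, ← ih, h1, qBinom_succ, pow_add, pow_succ (-1 : RatFunc ℚ), h6]
    ring

theorem lau_X : lauHom RatFunc.X = qL := by
  rw [← lau_eq, lau, RatFunc.coe_X, qL]

theorem gammaTerm_eq (α : ℚ) (k : ℕ) : gammaTerm α k = lau (fprod k (vq α)) := by
  rw [← term_eq_fprod]
  simp only [gammaTerm, lau_eq, map_mul, map_pow, map_neg, map_one, lau_X]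

theorem unsigned_orderTop (α : ℚ) (k : ℕ) :
    (qL ^ (k * (k + 1) / 2) * lau (qBinom (α - 1) k)).orderTop
      = (lau (fprod k (vq α))).orderTop := by
  rw [← gammaTerm_eq, gammaTerm, mul_assoc]
  rcases neg_one_pow_eq_or (LaurentSeries ℚ) k with h | h <;> rw [h]
  · rw [one_mul]
  · rw [neg_one_mul, HahnSeries.orderTop_neg]

theorem hasOrd_one_sub_X_pow (i : ℕ) : HasOrd (1 - RatFunc.X ^ (i + 1)) 0 :=
  hasOrd_one.sub (hasOrd_X.pow _) (by push_cast; omega)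

/-- If `v` has order `n ≤ 0` then every factor of the product has order exactly `n`. -/
theorem hasOrd_fprod {v : RatFunc ℚ} {n : ℤ} (hv : HasOrd v n) (hn : n ≤ 0) (k : ℕ) :
    HasOrd (fprod k v) (k * n) := by
  induction k with
  | zero => simpa [fprod] using hasOrd_one
  | succ k ih =>
    rw [fprod_succ]
    convert ih.mul ((hv.sub (hasOrd_X.pow (k + 1)) (by push_cast; omega)).div
      (hasOrd_one_sub_X_pow k)) using 1
    push_cast
    ring

/-- If `v` vanishes at `q = 0` then every factor of the product does. -/
theorem le_orderTop_fprod {v : RatFunc ℚ} {n : ℤ} (hv : HasOrd v n) (hn : 1 ≤ n) (k : ℕ) :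
    ((k : ℤ) : WithTop ℤ) ≤ (lau (fprod k v)).orderTop := by
  induction k with
  | zero => simp [fprod, lau_eq]
  | succ k ih =>
    rw [fprod_succ, lau_eq, map_mul, ← lau_eq, ← lau_eq, HahnSeries.orderTop_mul]
    push_cast
    refine add_le_add ih ?_
    by_cases h0 : v - RatFunc.X ^ (k + 1) = 0
    · simp [h0, lau_eq]
    · obtain ⟨m, hm⟩ := exists_hasOrd h0
      have h1 := hm.div (hasOrd_one_sub_X_pow k)
      rw [h1]
      have h2 : min (lau v).orderTop (lau (RatFunc.X ^ (k + 1))).orderTop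
          ≤ (lau (v - RatFunc.X ^ (k + 1))).orderTop := by
        rw [lau_eq (_ - _), map_sub]
        exact HahnSeries.min_orderTop_le_orderTop_sub
      rw [hm, hv, hasOrd_X.pow (k + 1)] at h2
      have h3 : min n (((k + 1 : ℕ) : ℤ) * 1) ≤ m := by exact_mod_cast h2
      have : 1 ≤ m - 0 := by push_cast at h3; omega
      exact_mod_cast this

/-- The relation between the products at `v` and at `q v`, i.e. at `α` and at `α + 1`: a form of the
`q`-Pascal rule. -/
theorem fprod_shift (n : ℕ) (v : RatFunc ℚ) :
    fprod (n + 1) (RatFunc.X * v) = fprod (n + 1) v - v * fprod n v := by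
  induction n with
  | zero =>
    have h := one_sub_X_pow_ne (n := 1) le_rfl
    simp only [fprod, zero_add, Finset.prod_range_one, Finset.prod_range_zero, pow_one] at h ⊢
    field_simp
    ring
  | succ n ih =>
    have h1 := one_sub_X_pow_ne (n := n + 1) (by omega)
    have h2 := one_sub_X_pow_ne (n := n + 1 + 1) (by omega)
    rw [fprod_succ (n + 1), ih, fprod_succ (n + 1) v, fprod_succ n v]
    field_simp
    ring

/-! ### Coefficientwise limits and gaps in polar parts -/

/-- Polynomials as Laurent series. -/
def polyL : Polynomial ℚ →+* LaurentSeries ℚ :=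
  lauHom.comp (algebraMap (Polynomial ℚ) (RatFunc ℚ))

theorem lauHom_C (c : ℚ) : lauHom (RatFunc.C c) = HahnSeries.single 0 c := by
  rw [eq_ratCast RatFunc.C c, map_ratCast, ← HahnSeries.C_apply]
  exact (eq_ratCast (HahnSeries.C : ℚ →+* LaurentSeries ℚ) c).symm

theorem polyL_monomial (n : ℕ) (c : ℚ) :
    polyL (Polynomial.monomial n c) = HahnSeries.single (n : ℤ) c := by
  rw [polyL, RingHom.comp_apply, ← Polynomial.C_mul_X_pow_eq_monomial, map_mul, map_pow,
    RatFunc.algebraMap_C, RatFunc.algebraMap_X, map_mul, map_pow, lau_X, lauHom_C, qL,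
    HahnSeries.single_pow, HahnSeries.single_mul_single]
  simp

theorem polyL_mul_coeff {p : Polynomial ℚ} {d : ℕ} (hd : p.natDegree ≤ d) (E : LaurentSeries ℚ)
    (j : ℤ) :
    (polyL p * E).coeff j = ∑ l ∈ Finset.range (d + 1), p.coeff l * E.coeff (j - l) := by
  conv_lhs => rw [p.as_sum_range' (d + 1) (by omega)]
  rw [map_sum, Finset.sum_mul, HahnSeries.coeff_sum]
  refine Finset.sum_congr rfl fun l _ => ?_
  rw [polyL_monomial]
  have := HahnSeries.coeff_single_mul_add (r := p.coeff l) (x := E) (a := j - l) (b := (l : ℤ))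
  rwa [sub_add_cancel] at this

theorem polyL_coeff_neg (p : Polynomial ℚ) {j : ℤ} (hj : j < 0) : (polyL p).coeff j = 0 := by
  rw [← mul_one (polyL p), polyL_mul_coeff le_rfl]
  refine Finset.sum_eq_zero fun l _ => ?_
  rw [HahnSeries.coeff_one, if_neg (by omega), mul_zero]

/-- The terms of the sequence tend to `0` coefficientwise. -/
def EventuallyZero (E : ℕ → LaurentSeries ℚ) : Prop :=
  ∀ j : ℤ, ∃ n₀ : ℕ, ∀ n ≥ n₀, (E n).coeff j = 0

theorem EventuallyZero.succ {E : ℕ → LaurentSeries ℚ} (h : EventuallyZero E) :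
    EventuallyZero fun n => E (n + 1) := fun j => by
  obtain ⟨n₀, h⟩ := h j
  exact ⟨n₀, fun n hn => h _ (by omega)⟩

theorem EventuallyZero.of_succ {E : ℕ → LaurentSeries ℚ}
    (h : EventuallyZero fun n => E (n + 1)) : EventuallyZero E := fun j => by
  obtain ⟨n₀, h⟩ := h j
  refine ⟨n₀ + 1, fun n hn => ?_⟩
  obtain ⟨m, rfl⟩ := Nat.exists_eq_add_of_le' (show 1 ≤ n by omega)
  exact h m (by omega)

theorem EventuallyZero.add {E F : ℕ → LaurentSeries ℚ} (hE : EventuallyZero E)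
    (hF : EventuallyZero F) : EventuallyZero fun n => E n + F n := fun j => by
  obtain ⟨n₀, h⟩ := hE j
  obtain ⟨n₁, h'⟩ := hF j
  refine ⟨max n₀ n₁, fun n hn => ?_⟩
  rw [HahnSeries.coeff_add, h n (by omega), h' n (by omega), add_zero]

theorem EventuallyZero.polyL_mul {E : ℕ → LaurentSeries ℚ} (hE : EventuallyZero E)
    (p : Polynomial ℚ) : EventuallyZero fun n => polyL p * E n := by
  induction p using Polynomial.induction_on' with
  | add p q hp hq => simpa only [map_add, add_mul] using hp.add hq
  | monomial m c =>
    intro j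
    obtain ⟨n₀, h⟩ := hE (j - m)
    refine ⟨n₀, fun n hn => ?_⟩
    have := HahnSeries.coeff_single_mul_add (r := c) (x := E n) (a := j - m) (b := (m : ℤ))
    rw [sub_add_cancel] at this
    rw [polyL_monomial, this, h n hn, mul_zero]

theorem EventuallyZero.window {E : ℕ → LaurentSeries ℚ} (hE : EventuallyZero E) (d : ℕ) :
    ∃ n₀ : ℕ, ∀ n ≥ n₀, ∀ j : ℤ, -d ≤ j → j < 0 → (E n).coeff j = 0 := by
  induction d with
  | zero => exact ⟨0, fun n _ j h1 h2 => by push_cast at h1; omega⟩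
  | succ d ih =>
    obtain ⟨n₀, h⟩ := ih
    obtain ⟨n₁, h'⟩ := hE (-(d + 1 : ℕ))
    refine ⟨max n₀ n₁, fun n hn j h1 h2 => ?_⟩
    rcases h1.eq_or_lt with h3 | h3
    · rw [← h3]
      exact h' n (by omega)
    · exact h n (by omega) j (by push_cast at h3; omega) h2

/-- Backward propagation of zeros. If `N E_{n+1} - M E_n` has no polar part and
`deg N ≤ deg M`, then a gap in the polar part of `E_{n+1}` is inherited by `E_n`, provided the
`deg M` topmost polar coefficients of `E_n` vanish: comparing coefficients expresses the
coefficient of `E_n` at `j` through those of `E_n` above `j` and those of `E_{n+1}` from `j` up. -/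
theorem gap_descent {M N : Polynomial ℚ} (hM : M ≠ 0) (hdeg : N.natDegree ≤ M.natDegree)
    {E E' : LaurentSeries ℚ} (hrec : ∀ j < 0, (polyL N * E' - polyL M * E).coeff j = 0)
    (htop : ∀ j : ℤ, -M.natDegree ≤ j → j < 0 → E.coeff j = 0) (g : ℤ)
    (hE' : ∀ j : ℤ, g ≤ j → j < 0 → E'.coeff j = 0) :
    ∀ j : ℤ, g ≤ j → j < 0 → E.coeff j = 0 := by
  have key : ∀ t : ℕ, ∀ j : ℤ, j = -1 - t → g ≤ j → E.coeff j = 0 := by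
    intro t
    induction t using Nat.strong_induction_on with
    | _ t ih =>
      intro j hj hg
      by_cases hjD : -(M.natDegree : ℤ) ≤ j
      · exact htop j hjD (by omega)
      have h := hrec (M.natDegree + j) (by omega)
      rw [HahnSeries.coeff_sub, polyL_mul_coeff hdeg, polyL_mul_coeff le_rfl,
        Finset.sum_eq_zero, Finset.sum_range_succ, Finset.sum_eq_zero] at h
      · rw [zero_add, zero_sub, neg_eq_zero, add_sub_cancel_left] at h
        exact (mul_eq_zero.mp h).resolve_left (Polynomial.leadingCoeff_ne_zero.mpr hM)
      · intro l hl
        rw [Finset.mem_range] at hl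
        rw [ih (-1 - (M.natDegree + j - l)).toNat (by omega) _ (by omega) (by omega), mul_zero]
      · intro l hl
        rw [Finset.mem_range] at hl
        rw [hE' _ (by omega) (by omega), mul_zero]
  intro j hg hj
  exact key (-1 - j).toNat j (by omega) hg

/-- A sequence satisfying the hypotheses of `gap_descent` at every step, with poles of unboundedly
growing order, does not tend to `0` coefficientwise: a gap covering the polar part of some `E n₁`
would occur far out in the sequence, and could be carried back to `E n₁`. -/
theorem not_eventuallyZero {M N : Polynomial ℚ} (hM : M ≠ 0)
    (hdeg : N.natDegree ≤ M.natDegree) {E : ℕ → LaurentSeries ℚ}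
    (hrec : ∀ n, ∀ j < 0, (polyL N * E (n + 1) - polyL M * E n).coeff j = 0)
    {o : ℤ} (ho : ∀ n : ℕ, (E n).orderTop = ((o - n : ℤ) : WithTop ℤ)) : ¬ EventuallyZero E := by
  intro hE
  obtain ⟨n₀, hn₀⟩ := hE.window M.natDegree
  -- an index `n₁ ≥ n₀` for which `E n₁` has a pole
  obtain ⟨n₁, hn₁, hg⟩ : ∃ n₁ ≥ n₀, o - (n₁ : ℤ) < 0 := ⟨n₀ + (o + 1).toNat, by omega, by omega⟩
  obtain ⟨n₂, hn₂⟩ := hE.window (-(o - (n₁ : ℤ))).toNat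
  have key : ∀ k : ℕ, (∀ j : ℤ, o - n₁ ≤ j → j < 0 → (E (n₁ + k)).coeff j = 0) →
      ∀ j : ℤ, o - n₁ ≤ j → j < 0 → (E n₁).coeff j = 0 := by
    intro k
    induction k with
    | zero => exact id
    | succ k ih =>
      exact fun h => ih (gap_descent hM hdeg (hrec _) (hn₀ _ (by omega)) _ h)
  have h := key n₂ (fun j h1 h2 => hn₂ _ (by omega) j (by omega) h2) _ le_rfl hg
  exact HahnSeries.coeff_orderTop_ne (ho n₁) h

/-! ### Divergence for parameters less than one -/

/-- The products `fprod n v` tend to `0` coefficientwise after clearing some nonzero polynomial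
denominator. -/
def Vanishing (v : RatFunc ℚ) : Prop :=
  ∃ Q : Polynomial ℚ, Q ≠ 0 ∧ EventuallyZero fun n => polyL Q * lauHom (fprod n v)

theorem polyL_num (v : RatFunc ℚ) : polyL v.num = polyL v.denom * lauHom v := by
  rw [polyL, RingHom.comp_apply, RingHom.comp_apply, ← map_mul]
  congr 1
  have h := RatFunc.num_div_denom v
  rw [div_eq_iff (RatFunc.algebraMap_ne_zero v.denom_ne_zero)] at h
  rw [h, mul_comm]

/-- The identity `fprod_shift` with the denominator of `v` cleared. -/
theorem rec_fprod (n : ℕ) (v : RatFunc ℚ) :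
    polyL v.denom * lauHom (fprod (n + 1) (RatFunc.X * v))
      = polyL v.denom * lauHom (fprod (n + 1) v) - polyL v.num * lauHom (fprod n v) := by
  rw [fprod_shift, map_sub, map_mul, polyL_num]
  ring

theorem Vanishing.shift {v : RatFunc ℚ} (h : Vanishing v) : Vanishing (RatFunc.X * v) := by
  obtain ⟨Q, hQ, hE⟩ := h
  refine ⟨Q * v.denom, mul_ne_zero hQ v.denom_ne_zero, EventuallyZero.of_succ ?_⟩
  convert (hE.succ.polyL_mul v.denom).add (hE.polyL_mul (-v.num)) using 2 with n
  rw [map_mul, mul_assoc, rec_fprod, map_neg]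
  ring

theorem exists_hasOrd_polyL {Q : Polynomial ℚ} (hQ : Q ≠ 0) :
    ∃ m : ℤ, 0 ≤ m ∧ HasOrd (algebraMap _ _ Q) m := by
  obtain ⟨m, hm⟩ := exists_hasOrd (RatFunc.algebraMap_ne_zero hQ)
  refine ⟨m, ?_, hm⟩
  by_contra h
  exact HahnSeries.coeff_orderTop_ne hm (polyL_coeff_neg Q (by omega))

theorem not_vanishing_of_hasOrd_zero {v : RatFunc ℚ} (hv : HasOrd v 0) : ¬ Vanishing v := by
  rintro ⟨Q, hQ, hE⟩
  obtain ⟨m, -, hm⟩ := exists_hasOrd_polyL hQ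
  obtain ⟨n₀, h⟩ := hE m
  have h1 := hm.mul (hasOrd_fprod hv le_rfl n₀)
  rw [mul_zero, add_zero, HasOrd, lau_eq, map_mul] at h1
  exact HahnSeries.coeff_orderTop_ne h1 (h n₀ le_rfl)

/-- For `-1 < α < 0` the function `v = vq α` has a simple pole at `q = 0` and is a unit at `∞`, so
its denominator and numerator have the same degree and `not_eventuallyZero` applies to
`Q * fprod n v`. The recurrence it needs comes from `fprod_shift`, because `q v` is a unit at
`q = 0` and hence so is every `fprod (n + 1) (q v)`. -/
theorem not_vanishing_of_neg_one_lt {α : ℚ} (h1 : -1 < α) (h2 : α < 0) : ¬ Vanishing (vq α) := by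
  rintro ⟨Q, hQ, hE⟩
  have hd := hasDeg_vq h1 h2
  have hfl : ⌊α⌋ = -1 := by
    rw [Int.floor_eq_iff]
    push_cast
    constructor <;> linarith
  have hv := hasOrd_vq α
  have hXv : HasOrd (RatFunc.X * vq α) 0 := by simpa [hfl] using hasOrd_X.mul hv
  rw [hfl] at hv
  obtain ⟨m, -, hm⟩ := exists_hasOrd_polyL hQ
  refine not_eventuallyZero (M := (vq α).num) (N := (vq α).denom) (o := m)
    (RatFunc.num_ne_zero hd.1) ?_ ?_ ?_ hE
  · have := hd.2
    rw [RatFunc.intDegree] at this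
    omega
  · intro n j hj
    obtain ⟨e, he, ho⟩ := exists_hasOrd_polyL (mul_ne_zero hQ (vq α).denom_ne_zero)
    have h := ho.mul (hasOrd_fprod hXv le_rfl (n + 1))
    have h' : polyL (vq α).denom * (polyL Q * lauHom (fprod (n + 1) (vq α)))
        - polyL (vq α).num * (polyL Q * lauHom (fprod n (vq α)))
        = lau (algebraMap _ _ (Q * (vq α).denom) * fprod (n + 1) (RatFunc.X * vq α)) := by
      rw [lau_eq, map_mul lauHom]
      change _ = polyL (Q * (vq α).denom) * _
      rw [map_mul, mul_assoc, rec_fprod]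
      ring
    rw [h']
    apply HahnSeries.coeff_eq_zero_of_lt_orderTop
    rw [h]
    have : j < e + ((n + 1 : ℕ) : ℤ) * 0 := by omega
    exact_mod_cast this
  · intro n
    have h := hm.mul (hasOrd_fprod hv (by omega) n)
    rw [HasOrd, lau_eq, map_mul] at h
    rw [show m - (n : ℤ) = m + n * -1 by ring]
    exact h

/-- Replacing `α` by `α + 1` multiplies `vq α` by `q` and preserves `Vanishing`, so `α` may be moved
to `0` if it is a negative integer, and into `(-1, 0)` if it is negative and not an integer. -/
theorem not_vanishing_vq {α : ℚ} (h : α < 1) : ¬ Vanishing (vq α) := by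
  intro hV
  have hshift : ∀ r : ℕ, Vanishing (vq (α + r)) := by
    intro r
    induction r with
    | zero => simpa using hV
    | succ r ih =>
      push_cast
      rw [← add_assoc, vq_add_one]
      exact ih.shift
  rcases le_or_gt 0 α with h0 | h0
  · refine not_vanishing_of_hasOrd_zero ?_ hV
    have := hasOrd_vq α
    rwa [show ⌊α⌋ = 0 by rw [Int.floor_eq_iff]; push_cast; constructor <;> linarith] at this
  have hfl : ⌊α⌋ < 0 := Int.floor_lt.mpr (by exact_mod_cast h0)
  have hf := Int.fract_add_floor α
  rcases (Int.fract_nonneg α).eq_or_lt with hz | hz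
  · refine not_vanishing_of_hasOrd_zero ?_ (hshift (-⌊α⌋).toNat)
    have h1 : (((-⌊α⌋).toNat : ℤ) : ℚ) = ((-⌊α⌋ : ℤ) : ℚ) := by
      rw [Int.toNat_of_nonneg (by omega)]
    push_cast at h1
    rw [h1, show α + -(⌊α⌋ : ℚ) = 0 by linarith, vq_zero]
    exact hasOrd_one
  · have h1 : (((-1 - ⌊α⌋).toNat : ℤ) : ℚ) = ((-1 - ⌊α⌋ : ℤ) : ℚ) := by
      rw [Int.toNat_of_nonneg (by omega)]
    push_cast at h1
    have h2 := Int.fract_lt_one α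
    refine not_vanishing_of_neg_one_lt ?_ ?_ (hshift (-1 - ⌊α⌋).toNat) <;>
    · rw [h1]
      linarith

/-! ### Coefficientwise summation -/

theorem eventuallyZero_of_sum {E : ℕ → LaurentSeries ℚ} {F : LaurentSeries ℚ}
    (h : ∀ m : ℤ, ∃ K₀ : ℕ, ∀ K ≥ K₀, (∑ k ∈ Finset.range K, E k).coeff m = F.coeff m) :
    EventuallyZero E := fun j => by
  obtain ⟨K₀, h⟩ := h j
  refine ⟨K₀, fun n hn => ?_⟩
  have h1 := h (n + 1) (by omega)
  rw [Finset.sum_range_succ, HahnSeries.coeff_add, h n hn] at h1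
  simpa using h1

/-- The sum is a power series whose `m`-th coefficient only involves the terms `E 0, …, E m`. -/
theorem exists_sum {E : ℕ → LaurentSeries ℚ}
    (h : ∀ k : ℕ, ((k : ℤ) : WithTop ℤ) ≤ (E k).orderTop) :
    ∃ F : LaurentSeries ℚ, ∀ m : ℤ, ∃ K₀ : ℕ, ∀ K ≥ K₀,
      (∑ k ∈ Finset.range K, E k).coeff m = F.coeff m := by
  have hz : ∀ (k : ℕ) (m : ℤ), m < k → (E k).coeff m = 0 := fun k m hm =>
    HahnSeries.coeff_eq_zero_of_lt_orderTop (lt_of_lt_of_le (by exact_mod_cast hm) (h k))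
  refine ⟨HahnSeries.ofPowerSeries ℤ ℚ
    (PowerSeries.mk fun m => ∑ k ∈ Finset.range (m + 1), (E k).coeff m), fun m => ?_⟩
  refine ⟨(m + 1).toNat, fun K hK => ?_⟩
  rw [HahnSeries.coeff_sum]
  rcases lt_or_ge m 0 with hm | hm
  · rw [Finset.sum_eq_zero fun k _ => hz k m (by omega), HahnSeries.ofPowerSeries_apply,
      HahnSeries.embDomain_of_notMem_range]
    rintro ⟨x, hx⟩
    simp at hx
    omega
  · obtain ⟨n, rfl⟩ := Int.eq_ofNat_of_zero_le hm
    rw [HahnSeries.ofPowerSeries_apply_coeff, PowerSeries.coeff_mk]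
    refine (Finset.sum_subset (Finset.range_mono (by omega)) fun k _ hk => hz k _ ?_).symm
    rw [Finset.mem_range] at hk
    omega

/-- The order of `q^{k(k+1)/2}·binom(α-1,k)_q` tends to `+∞` as `k → ∞` if and
only if `α ≥ 1` (with `ord 0 = ∞`, i.e. using `HahnSeries.orderTop`).
Consequently, for `α ≥ 1` the series `B_{α-1}(q,-q) = Σ_k (-1)^k·q^{k(k+1)/2}·binom(α-1,k)_q`
defines a well-defined element of `ℚ((q))` (the partial sums stabilize
coefficientwise to a Laurent series), while for `α < 1` it does not. -/
theorem gammaTerm_orderTop_tendsto_iff (α : ℚ) :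
    ((∀ M : ℤ, ∃ K₀ : ℕ, ∀ k ≥ K₀,
        (M : WithTop ℤ) ≤ (qL ^ (k * (k + 1) / 2) * lau (qBinom (α - 1) k)).orderTop)
      ↔ 1 ≤ α) ∧
    (1 ≤ α → ∃ F : LaurentSeries ℚ, ∀ m : ℤ, ∃ K₀ : ℕ, ∀ K ≥ K₀,
        (∑ k ∈ Finset.range K, gammaTerm α k).coeff m = F.coeff m) ∧
    (α < 1 → ¬ ∃ F : LaurentSeries ℚ, ∀ m : ℤ, ∃ K₀ : ℕ, ∀ K ≥ K₀,
        (∑ k ∈ Finset.range K, gammaTerm α k).coeff m = F.coeff m) := by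
  have hterm : ∀ k, gammaTerm α k = lauHom (fprod k (vq α)) := gammaTerm_eq α
  refine ⟨⟨fun h => ?_, fun h M => ?_⟩, fun h => ?_, fun h => ?_⟩
  · by_contra hα
    push Not at hα
    obtain ⟨K₀, h⟩ := h 1
    have h1 := h K₀ le_rfl
    have hfl : ⌊α⌋ ≤ 0 := by
      rw [Int.floor_le_iff]
      push_cast
      linarith
    rw [unsigned_orderTop, hasOrd_fprod (hasOrd_vq α) hfl] at h1
    have h2 : (1 : ℤ) ≤ K₀ * ⌊α⌋ := by exact_mod_cast h1
    have h3 := mul_nonpos_of_nonneg_of_nonpos (Int.natCast_nonneg K₀) hfl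
    omega
  · refine ⟨M.toNat, fun k hk => ?_⟩
    rw [unsigned_orderTop]
    refine le_trans ?_ (le_orderTop_fprod (hasOrd_vq α) (Int.le_floor.mpr (by exact_mod_cast h)) k)
    have : M ≤ k := by omega
    exact_mod_cast this
  · refine exists_sum fun k => ?_
    rw [gammaTerm_eq]
    exact le_orderTop_fprod (hasOrd_vq α) (Int.le_floor.mpr (by exact_mod_cast h)) k
  · rintro ⟨F, hF⟩
    refine not_vanishing_vq h ⟨1, one_ne_zero, ?_⟩
    have hE := eventuallyZero_of_sum hF
    rw [show gammaTerm α = fun k => lauHom (fprod k (vq α)) from funext hterm] at hE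
    simpa only [map_one, one_mul] using hE

end
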